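/- Let 1, α₁, α₂ be linearly independent over ℤ and let m_ν, m_{ν+1} be two consecutive best approximations. Then ζ_ν · M_{ν+1}² ≤ 1. -/

import Mathlib

/-- distance from a real number to the nearest integer -/
noncomputable def nint (ξ : ℝ) : ℝ := |ξ - round ξ|

/-- `1, α₁, α₂` are linearly independent over `ℤ` -/
def ZLinIndep (α₁ α₂ : ℝ) : Prop :=
  ∀ a b c : ℤ, (a : ℝ) + b * α₁ + c * α₂ = 0 → a = 0 ∧ b = 0 ∧ c = 0

/-- the golden ratio τ = (1+√5)/2 -/
noncomputable def tau : ℝ := (1 + Real.sqrt 5) / 2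

/-- the value of the linear form ζ(m) = m₀ + m₁α₁ + m₂α₂ at an integer vector m -/
noncomputable def zform (α₁ α₂ : ℝ) (m : ℤ × ℤ × ℤ) : ℝ :=
  (m.1 : ℝ) + m.2.1 * α₁ + m.2.2 * α₂

/-- the height M(m) = max{|m₁|, |m₂|} of an integer vector m = (m₀, m₁, m₂) -/
def hgt (m : ℤ × ℤ × ℤ) : ℤ := max |m.2.1| |m.2.2|

/-- `m` is a best approximation (in the sense of the linear form) for `α₁, α₂`:
`|ζ(m)|` is minimal among all integer vectors `n` with `0 < max{|n₁|,|n₂|} ≤ max{|m₁|,|m₂|}`. -/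
noncomputable def IsBestApprox (α₁ α₂ : ℝ) (m : ℤ × ℤ × ℤ) : Prop :=
  0 < hgt m ∧
  ∀ n : ℤ × ℤ × ℤ, 0 < hgt n → hgt n ≤ hgt m →
    |zform α₁ α₂ m| ≤ |zform α₁ α₂ n|

/-- `m` and `m'` are two consecutive best approximations (`m = m_ν`, `m' = m_{ν+1}`):
both are best approximations, `M(m) < M(m')`, and no best approximation has height
strictly between them. -/
noncomputable def ConsecutiveBest (α₁ α₂ : ℝ) (m m' : ℤ × ℤ × ℤ) : Prop :=
  IsBestApprox α₁ α₂ m ∧ IsBestApprox α₁ α₂ m' ∧ hgt m < hgt m' ∧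
  ∀ n : ℤ × ℤ × ℤ, IsBestApprox α₁ α₂ n → hgt n ≤ hgt m ∨ hgt m' ≤ hgt n

/-!
By Dirichlet's pigeonhole argument, for any `X ≥ 2` two of the `X ^ 2` numbers
`a * α₁ + b * α₂` with `0 ≤ a, b < X` lie within `1 / X ^ 2` of each other modulo `1`. Their
difference gives an integer vector `n` with `0 < M(n) < X` and `|ζ(n)| ≤ 1 / X ^ 2`. For
`X = M_{ν+1}` no vector of positive height below `X` does better than `m_ν`, so `ζ_ν ≤ |ζ(n)|`.
-/

section Pigeonhole

open Int

theorem nint_sub_le_of_floor_fract_mul_eq {x y N : ℝ} (hN : 0 < N)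
    (hxy : ⌊fract x * N⌋ = ⌊fract y * N⌋) : nint (x - y) ≤ 1 / N :=
  calc nint (x - y) ≤ |x - y - (⌊x⌋ - ⌊y⌋ : ℤ)| := round_le _ _
    _ = |fract x - fract y| := by
      push_cast [fract]
      congr 1
      ring
    _ ≤ 1 / N := by
      rw [le_div_iff₀ hN]
      calc |fract x - fract y| * N = |fract x * N - fract y * N| := by
            rw [← sub_mul, abs_mul, abs_of_pos hN]
        _ ≤ 1 := (abs_sub_lt_one_of_floor_eq_floor hxy).le

theorem nint_le_of_le_fract {x δ : ℝ} (hx : 1 - δ ≤ fract x) : nint x ≤ δ := by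
  rw [nint, abs_sub_round_eq_min]
  exact (min_le_right _ _).trans (by linarith)

theorem exists_ne_nint_sub_le {ι : Type*} [Fintype ι] [Nontrivial ι] (f : ι → ℝ) :
    ∃ i j, i ≠ j ∧ nint (f i - f j) ≤ 1 / Fintype.card ι := by
  set N := Fintype.card ι
  have one_lt_N : 1 < N := Fintype.one_lt_card
  have N_pos : (0 : ℝ) < N := by positivity
  obtain ⟨i₀⟩ : Nonempty ι := inferInstance
  let x (i : ι) : ℝ := f i - f i₀
  have floor_nonneg (i : ι) : 0 ≤ ⌊fract (x i) * N⌋ := by positivity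
  have floor_lt (i : ι) : ⌊fract (x i) * N⌋ < N :=
    floor_lt.mpr (mul_lt_of_lt_one_left N_pos (fract_lt_one _))
  let bin (i : ι) : Fin N := ⟨⌊fract (x i) * N⌋.toNat, by have := floor_lt i; omega⟩
  have floor_eq (i : ι) : ⌊fract (x i) * N⌋ = bin i := (toNat_of_nonneg (floor_nonneg i)).symm
  by_cases bin_inj : Function.Injective bin
  · -- Every bin is hit. A point of the last one is close to `x i₀ = 0` from the other side of `1`.
    have bin_surj := ((Fintype.bijective_iff_injective_and_card bin).mpr
      ⟨bin_inj, (Fintype.card_fin N).symm⟩).surjective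
    obtain ⟨i, hi⟩ := bin_surj ⟨N - 1, by omega⟩
    have floor_last : ⌊fract (x i) * N⌋ = N - 1 := by
      rw [floor_eq, hi]
      exact natCast_pred_of_pos (by omega)
    refine ⟨i, i₀, ?_, nint_le_of_le_fract ?_⟩
    · rintro rfl
      simp only [x, sub_self, fract_zero, zero_mul, floor_zero] at floor_last
      omega
    · rw [one_sub_div N_pos.ne', div_le_iff₀ N_pos]
      exact_mod_cast le_floor.mp floor_last.ge
  · obtain ⟨i, j, same_bin, hij⟩ := Function.not_injective_iff.mp bin_inj
    refine ⟨i, j, hij, ?_⟩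
    rw [← sub_sub_sub_cancel_right (f i) (f j) (f i₀)]
    exact nint_sub_le_of_floor_fract_mul_eq N_pos (by rw [floor_eq, floor_eq, same_bin])

theorem exists_ne_zero_abs_lt_nint_sum_le {ι : Type*} [Fintype ι] [Nonempty ι] (α : ι → ℝ)
    {X : ℕ} (hX : 2 ≤ X) :
    ∃ k : ι → ℤ, k ≠ 0 ∧ (∀ i, |k i| < X) ∧
      nint (∑ i, k i * α i) ≤ 1 / (X : ℝ) ^ Fintype.card ι := by
  classical
  have : Nontrivial (Fin X) := Fin.nontrivial_iff_two_le.mpr hX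
  obtain ⟨a, b, hab, hle⟩ := exists_ne_nint_sub_le fun a : ι → Fin X ↦ ∑ i, (a i : ℝ) * α i
  refine ⟨fun i ↦ (a i : ℤ) - b i, fun h ↦ hab ?_,
    fun i ↦ abs_sub_lt_of_lt_lt (b i).isLt (a i).isLt, ?_⟩
  · ext i
    have := congrFun h i
    simp only [Pi.zero_apply] at this
    omega
  · simpa [sub_mul] using hle

end Pigeonhole

section BestApprox

variable {α₁ α₂ : ℝ}

theorem nint_le_abs_zform (m : ℤ × ℤ × ℤ) :
    nint (m.2.1 * α₁ + m.2.2 * α₂) ≤ |zform α₁ α₂ m| := by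
  have := round_le (m.2.1 * α₁ + m.2.2 * α₂) (-m.1)
  rwa [show m.2.1 * α₁ + m.2.2 * α₂ - (-m.1 : ℤ) = zform α₁ α₂ m by
    push_cast [zform]; ring] at this

theorem abs_zform_neg_round (b c : ℤ) :
    |zform α₁ α₂ (-round (b * α₁ + c * α₂), b, c)| = nint (b * α₁ + c * α₂) := by
  rw [nint, zform]
  push_cast
  congr 1
  ring

variable (α₁ α₂) in
theorem exists_isBestApprox_le {n : ℤ × ℤ × ℤ} (hn : 0 < hgt n) :
    ∃ q, IsBestApprox α₁ α₂ q ∧ hgt q ≤ hgt n ∧ |zform α₁ α₂ q| ≤ |zform α₁ α₂ n| := by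
  -- For fixed `m₁, m₂` the best `m₀` is a rounding, so only finitely many pairs compete.
  let S : Set (ℤ × ℤ) := {p | 0 < max |p.1| |p.2| ∧ max |p.1| |p.2| ≤ hgt n}
  have S_finite : S.Finite := by
    refine (Set.finite_Icc (-hgt n, -hgt n) (hgt n, hgt n)).subset fun p hp ↦ ?_
    have ⟨h₁, h₂⟩ := max_le_iff.mp hp.2
    exact ⟨⟨(abs_le.mp h₁).1, (abs_le.mp h₂).1⟩, ⟨(abs_le.mp h₁).2, (abs_le.mp h₂).2⟩⟩
  obtain ⟨⟨b, c⟩, ⟨q_pos, q_le⟩, q_min⟩ :=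
    S.exists_min_image (fun p ↦ nint (p.1 * α₁ + p.2 * α₂)) S_finite ⟨n.2, hn, le_rfl⟩
  let q : ℤ × ℤ × ℤ := (-round (b * α₁ + c * α₂), b, c)
  have zform_q_le (k : ℤ × ℤ × ℤ) (hk : 0 < hgt k) (hkn : hgt k ≤ hgt n) :
      |zform α₁ α₂ q| ≤ |zform α₁ α₂ k| :=
    calc |zform α₁ α₂ q| = nint (b * α₁ + c * α₂) := abs_zform_neg_round b c
      _ ≤ nint (k.2.1 * α₁ + k.2.2 * α₂) := q_min k.2 ⟨hk, hkn⟩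
      _ ≤ |zform α₁ α₂ k| := nint_le_abs_zform k
  exact ⟨q, ⟨q_pos, fun k hk hkq ↦ zform_q_le k hk (hkq.trans q_le)⟩, q_le, zform_q_le n hn le_rfl⟩

theorem ConsecutiveBest.abs_zform_le {m m' n : ℤ × ℤ × ℤ} (hc : ConsecutiveBest α₁ α₂ m m')
    (hn : 0 < hgt n) (hnm' : hgt n < hgt m') : |zform α₁ α₂ m| ≤ |zform α₁ α₂ n| := by
  obtain ⟨⟨-, m_min⟩, -, -, no_best_between⟩ := hc
  obtain ⟨q, q_best, hqn, q_le⟩ := exists_isBestApprox_le α₁ α₂ hn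
  have hqm : hgt q ≤ hgt m :=
    (no_best_between q q_best).resolve_right (hqn.trans_lt hnm').not_ge
  exact (m_min q q_best.1 hqm).trans q_le

variable (α₁ α₂) in
theorem exists_hgt_lt_abs_zform_le {X : ℤ} (hX : 2 ≤ X) :
    ∃ n, 0 < hgt n ∧ hgt n < X ∧ |zform α₁ α₂ n| ≤ 1 / (X : ℝ) ^ 2 := by
  lift X to ℕ using by omega
  obtain ⟨k, k_ne, k_lt, k_le⟩ :=
    exists_ne_zero_abs_lt_nint_sum_le ![α₁, α₂] (X := X) (by exact_mod_cast hX)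
  refine ⟨(-round (k 0 * α₁ + k 1 * α₂), k 0, k 1), ?_, max_lt (k_lt 0) (k_lt 1), ?_⟩
  · obtain ⟨i, hi⟩ := Function.ne_iff.mp k_ne
    rw [hgt, lt_max_iff, abs_pos, abs_pos]
    fin_cases i
    exacts [.inl hi, .inr hi]
  · rw [abs_zform_neg_round]
    simpa [Fin.sum_univ_two] using k_le

end BestApprox

theorem zeta_mul_sq_height_le_one_general (α₁ α₂ : ℝ)
    (m m' : ℤ × ℤ × ℤ) (hc : ConsecutiveBest α₁ α₂ m m') :
    |zform α₁ α₂ m| * (hgt m' : ℝ) ^ 2 ≤ 1 := by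
  have two_le : 2 ≤ hgt m' := by
    have := hc.1.1
    have := hc.2.2.1
    omega
  have hgt_pos : (0 : ℝ) < hgt m' := by exact_mod_cast two_pos.trans_le two_le
  obtain ⟨n, n_pos, n_lt, n_le⟩ := exists_hgt_lt_abs_zform_le α₁ α₂ two_le
  rw [← le_div_iff₀ (pow_pos hgt_pos 2)]
  exact (hc.abs_zform_le n_pos n_lt).trans n_le

/-- For consecutive best approximations `m = m_ν`, `m' = m_{ν+1}`: ζ_ν · M_{ν+1}² ≤ 1. -/
theorem zeta_mul_sq_height_le_one (α₁ α₂ : ℝ) (h : ZLinIndep α₁ α₂)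
    (m m' : ℤ × ℤ × ℤ) (hc : ConsecutiveBest α₁ α₂ m m') :
    |zform α₁ α₂ m| * (hgt m' : ℝ) ^ 2 ≤ 1 :=
  zeta_mul_sq_height_le_one_general α₁ α₂ m m' hc
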